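/- For all integers n, j with n ≥ 1 and 0 ≤ j ≤ n−1, the number of ordered partitions π of [n] = {1,…,n} into k nonempty lists, summed over all k from 1 to n−j, with nse(π) = j, equals ∑_{k=1}^{n−j} c(n,n−j) · S(n−j,k) · k! , i.e., the marginal distribution of nse over lists of lists with k blocks is c(n,n−j) · S(n−j,k) · k!. -/

import Mathlib

open Finset

/-- The number of cycles (including fixed points) of a permutation of `Fin n`. -/
noncomputable def cycleCount {n : ℕ} (σ : Equiv.Perm (Fin n)) : ℕ :=
  σ.cycleType.card + (Finset.univ.filter fun x => σ x = x).card

/-- The unsigned Stirling number of the first kind `c(n,k)`: the number of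
permutations of an `n`-element set with exactly `k` cycles. -/
noncomputable def stirlingFirst (n k : ℕ) : ℕ :=
  Set.ncard {σ : Equiv.Perm (Fin n) | cycleCount σ = k}

/-- The signed Stirling number of the first kind `s(n,k) = (-1)^(n-k) c(n,k)`. -/
noncomputable def stirlingFirstSigned (n k : ℕ) : ℤ :=
  (-1) ^ (n - k) * (stirlingFirst n k : ℤ)

/-- `P` is an (unordered) partition of `Fin n` into nonempty blocks. -/
def IsPartitionOf (n : ℕ) (P : Finset (Finset (Fin n))) : Prop :=
  (∀ b ∈ P, b.Nonempty) ∧ (∀ b ∈ P, ∀ c ∈ P, b ≠ c → Disjoint b c) ∧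
    ∀ x : Fin n, ∃ b ∈ P, x ∈ b

/-- The Stirling number of the second kind `S(n,k)`: the number of partitions of an
`n`-element set into exactly `k` nonempty blocks. -/
noncomputable def stirlingSecond (n k : ℕ) : ℕ :=
  Set.ncard {P : Finset (Finset (Fin n)) | IsPartitionOf n P ∧ P.card = k}

/-- The Bell number `B n`: the number of partitions of an `n`-element set into
nonempty blocks. -/
noncomputable def bell (n : ℕ) : ℕ :=
  Set.ncard {P : Finset (Finset (Fin n)) | IsPartitionOf n P}

/-- The statistic `nse` of a list: the number of positions `j` such that some later
entry is smaller than the entry at position `j`. -/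
def nseList {α : Type*} [LinearOrder α] : List α → ℕ
  | [] => 0
  | a :: w => (if ∃ b ∈ w, b < a then 1 else 0) + nseList w

/-- `B` is an ordered set partition ("list of sets") of `Fin n` into `k` pairwise
disjoint nonempty blocks. -/
def IsOrderedSetPartition (n k : ℕ) (B : Fin k → Finset (Fin n)) : Prop :=
  (∀ j, (B j).Nonempty) ∧ (∀ j l, j ≠ l → Disjoint (B j) (B l)) ∧
    ∀ x : Fin n, ∃ j, x ∈ B j

/-- The statistic `nsb` of an ordered set partition: the number of indices `j`
such that `min (B j) > min (B l)` for some `l > j`. -/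
def nsbOSP {n k : ℕ} (B : Fin k → Finset (Fin n)) : ℕ :=
  (Finset.univ.filter fun j : Fin k => ∃ l, j < l ∧ (B l).min < (B j).min).card

/-- `P` is a "set of lists" partition of `Fin n`: an unordered collection of nonempty
sequences of distinct elements, with pairwise disjoint underlying sets covering `Fin n`. -/
def IsSetOfLists (n : ℕ) (P : Finset (List (Fin n))) : Prop :=
  (∀ w ∈ P, w ≠ []) ∧ (∀ w ∈ P, w.Nodup) ∧
    (∀ w ∈ P, ∀ u ∈ P, w ≠ u → ∀ x ∈ w, x ∉ u) ∧
    ∀ x : Fin n, ∃ w ∈ P, x ∈ w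

/-- The statistic `nse` of a set of lists: the sum of `nseList` over its blocks. -/
def nseSL {n : ℕ} (P : Finset (List (Fin n))) : ℕ := ∑ w ∈ P, nseList w

/-- `L` is a "list of lists" partition of `Fin n` into `k` blocks: a sequence of `k`
nonempty sequences of distinct elements, with pairwise disjoint underlying sets
covering `Fin n`. -/
def IsListOfLists (n k : ℕ) (L : Fin k → List (Fin n)) : Prop :=
  (∀ j, L j ≠ []) ∧ (∀ j, (L j).Nodup) ∧
    (∀ j l, j ≠ l → ∀ x ∈ L j, x ∉ L l) ∧
    ∀ x : Fin n, ∃ j, x ∈ L j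

/-- The statistic `nse` of a list of lists: the sum of `nseList` over its blocks. -/
def nseLL {n k : ℕ} (L : Fin k → List (Fin n)) : ℕ := ∑ j, nseList (L j)

/-- The statistic `nsb` of a list of lists: the number of indices `j` such that
`min (L j) > min (L l)` for some `l > j`. -/
def nsbLL {n k : ℕ} (L : Fin k → List (Fin n)) : ℕ :=
  (Finset.univ.filter fun j : Fin k => ∃ l, j < l ∧ (L l).minimum < (L j).minimum).card

/-- The number of ordered partitions of `[n]` into `k` nonempty lists with `nse = j`. -/
noncomputable def llpNseCount (n k j : ℕ) : ℕ :=
  Set.ncard {L : Fin k → List (Fin n) | IsListOfLists n k L ∧ nseLL L = j}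

section StirlingFirstPart
open Equiv Equiv.Perm

theorem aux_cc_swap {n : ℕ} (σ : Perm (Fin n)) (x : Fin n) (hx : σ x ≠ x) :
    cycleCount (swap x (σ x) * σ) = cycleCount σ + 1 := by
  have hfix : ∀ τ : Perm (Fin n), (Finset.univ.filter fun y => τ y = y).card + τ.support.card = n := by
    intro τ
    have := Finset.card_filter_add_card_filter_not (s := (Finset.univ : Finset (Fin n))) (fun y => τ y = y)
    simpa [Equiv.Perm.support] using this
  set c := σ.cycleOf x with hc
  have hcyc : c.IsCycle := isCycle_cycleOf σ hx
  have hcx : c x = σ x := cycleOf_apply_self σ x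
  have hdis : Disjoint c (c⁻¹ * σ) := by
    have h := disjoint_mul_inv_of_mem_cycleFactorsFinset
      (cycleOf_mem_cycleFactorsFinset_iff.2 (mem_support.2 hx) : c ∈ σ.cycleFactorsFinset)
    have hcomm : c⁻¹ * σ = σ * c⁻¹ := by
      have : Commute c σ := self_mem_cycle_factors_commute
        (cycleOf_mem_cycleFactorsFinset_iff.2 (mem_support.2 hx))
      exact (this.inv_left).eq
    rw [hcomm]; exact h.symm
  set d := c⁻¹ * σ with hd
  have hσ : σ = c * d := by simp [hd]
  have h1 : σ.cycleType = c.cycleType + d.cycleType := by rw [hσ]; exact hdis.cycleType_mul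
  have s1 : σ.support.card = c.support.card + d.support.card := by
    rw [hσ]; exact hdis.card_support_mul
  have hfσ := hfix σ
  rw [hcyc.cycleType] at h1
  rw [← hcx] at hx ⊢
  unfold cycleCount
  by_cases hcc : c (c x) = x
  · have he : c = swap x (c x) := hcyc.eq_swap_of_apply_apply_eq_self hx hcc
    have e2 : swap x (c x) * σ = d := by rw [← he, hσ, ← mul_assoc]; nth_rw 1 [he]; nth_rw 2 [he]; simp
    have hs : c.support.card = 2 := by rw [he]; exact card_support_swap hx.symm
    have := hfix d
    rw [e2, h1]; simp; omega
  · have hcyc2 := hcyc.swap_mul hx hcc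
    have hsup := support_swap_mul_eq c x hcc
    have hd2 : Disjoint (swap x (c x) * c) d := by
      rw [disjoint_iff_disjoint_support] at hdis ⊢
      rw [hsup]
      exact Finset.disjoint_of_subset_left Finset.sdiff_subset hdis
    have e2 : swap x (c x) * σ = (swap x (c x) * c) * d := by rw [hσ, mul_assoc]
    have s3 : (swap x (c x) * c).support.card + 1 = c.support.card := by
      rw [hsup, Finset.sdiff_singleton_eq_erase]
      exact Finset.card_erase_add_one (mem_support.2 hx)
    have := hfix ((swap x (c x) * c) * d)
    rw [hd2.card_support_mul] at this
    rw [e2, hd2.cycleType_mul, hcyc2.cycleType, h1]; simp; 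
    simp at this
    omega

theorem aux_cc_zero {n : ℕ} (e : Perm (Fin n)) :
    cycleCount (decomposeFin.symm (0, e)) = cycleCount e + 1 := by
  have hfix : ∀ (m : ℕ) (τ : Perm (Fin m)),
      (Finset.univ.filter fun y => τ y = y).card + τ.support.card = m := by
    intro m τ
    have := Finset.card_filter_add_card_filter_not (s := (Finset.univ : Finset (Fin m))) (fun y => τ y = y)
    simpa [Equiv.Perm.support] using this
  have h : (decomposeFin.symm (0, e)) = e.extendDomain (finSuccAboveEquiv (0 : Fin (n+1))) := by
    ext x
    refine Fin.cases ?_ (fun i => ?_) x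
    · rw [extendDomain_apply_not_subtype] <;> simp
    · have h0 : (e.extendDomain (finSuccAboveEquiv (0 : Fin (n+1)))) i.succ = (e i).succ :=
        extendDomain_apply_image e (finSuccAboveEquiv (0 : Fin (n+1))) i
      rw [h0]
      simp
  have ht : (decomposeFin.symm (0, e)).cycleType = e.cycleType := by
    rw [h, cycleType_extendDomain]
  have h1 := hfix _ e
  have h2 := hfix _ (decomposeFin.symm (0, e))
  rw [← sum_cycleType] at h1 h2
  unfold cycleCount
  rw [ht] at h2 ⊢
  omega

theorem aux_cc_pos {n : ℕ} (p : Fin (n+1)) (hp : p ≠ 0) (e : Perm (Fin n)) :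
    cycleCount (decomposeFin.symm (p, e)) = cycleCount e := by
  have h := aux_cc_swap (decomposeFin.symm (p, e)) 0 (by simpa using hp)
  have h2 : swap 0 ((decomposeFin.symm (p, e)) 0) * decomposeFin.symm (p, e)
      = decomposeFin.symm (0, e) := by
    ext x
    refine Fin.cases ?_ (fun i => ?_) x <;> simp
  rw [h2, aux_cc_zero] at h
  omega

theorem aux_stirlingFirst (n k : ℕ) : stirlingFirst n k = Nat.stirlingFirst n k := by
  have key : ∀ n k, stirlingFirst n k =
      ∑ σ : Perm (Fin n), if cycleCount σ = k then 1 else 0 := by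
    intro n k
    unfold stirlingFirst
    rw [← Finset.card_filter, ← Set.ncard_coe_finset]; simp
  rw [key]
  induction n generalizing k with
  | zero =>
    cases k <;> simp [cycleCount, Nat.stirlingFirst]
  | succ n ih =>
    rw [← decomposeFin.symm.sum_comp, Fintype.sum_prod_type, Fin.sum_univ_succ]
    simp only [aux_cc_zero, aux_cc_pos _ (Fin.succ_ne_zero _)]
    simp only [ih, Finset.sum_const, Finset.card_univ, Fintype.card_fin, smul_eq_mul]
    cases k with
    | zero => cases n <;> simp
    | succ k =>
      simp only [Nat.add_right_cancel_iff, ih]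
      rw [Nat.stirlingFirst_succ_succ, add_comm]

end StirlingFirstPart
section ListPart
open Polynomial

/-- Finset of all orderings of a finset. -/
def ordLists {α : Type*} [DecidableEq α] (s : Finset α) : Finset (List α) :=
  ⟨s.1.lists, Multiset.lists_nodup_finset s⟩

theorem mem_ordLists {α : Type*} [DecidableEq α] (s : Finset α) (l : List α) :
    l ∈ ordLists s ↔ l.Nodup ∧ ∀ x, x ∈ l ↔ x ∈ s := by
  unfold ordLists
  rw [Finset.mem_mk, Multiset.mem_lists_iff]
  constructor
  · intro h
    have h' : s.1 = (l : Multiset α) := h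
    refine ⟨by rw [← Multiset.coe_nodup, ← h']; exact s.2, fun x => ?_⟩
    rw [← Finset.mem_val, h', Multiset.mem_coe]
  · rintro ⟨h1, h2⟩
    change s.1 = (l : Multiset α)
    rw [Multiset.Nodup.ext s.2 (Multiset.coe_nodup.2 h1)]
    intro x
    rw [Multiset.mem_coe, h2, Finset.mem_val]

noncomputable def Ppoly (m : ℕ) : ℕ[X] := ∏ i ∈ Finset.range m, (1 + (i : ℕ[X]) * X)

theorem sum_ordLists {α : Type*} [LinearOrder α] (m : ℕ) (s : Finset α) (hs : s.card = m) :
    ∑ w ∈ ordLists s, (X : ℕ[X]) ^ nseList w = Ppoly m := by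
  induction m generalizing s with
  | zero =>
    rw [Finset.card_eq_zero] at hs
    subst hs
    have : ordLists (∅ : Finset α) = {[]} := by
      ext l
      rw [mem_ordLists]
      simp only [Finset.notMem_empty, iff_false, Finset.mem_singleton]
      rw [← List.eq_nil_iff_forall_not_mem]
      constructor
      · exact fun h => h.2
      · rintro rfl; simp
    rw [this]; simp [nseList, Ppoly]
  | succ m ih =>
    have hne : s.Nonempty := Finset.card_pos.1 (by omega)
    have step : ∑ w ∈ ordLists s, (X : ℕ[X]) ^ nseList w =
        ∑ p ∈ s.sigma (fun a => ordLists (s.erase a)), (X : ℕ[X]) ^ nseList (p.1 :: p.2) := by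
      symm
      refine Finset.sum_bij (fun p _ => p.1 :: p.2) ?_ ?_ ?_ ?_
      · rintro ⟨a, w⟩ h
        simp only [Finset.mem_sigma, mem_ordLists, Finset.mem_erase] at h ⊢
        obtain ⟨ha, hw, hm⟩ := h
        refine ⟨List.nodup_cons.2 ⟨fun h => ((hm a).1 h).1 rfl, hw⟩, fun x => ?_⟩
        rw [List.mem_cons, hm]
        by_cases hx : x = a
        · simp [hx, ha]
        · simp [hx]
      · rintro ⟨a, w⟩ _ ⟨b, v⟩ _ h
        simp only [List.cons.injEq] at h
        obtain ⟨rfl, rfl⟩ := h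
        rfl
      · intro l hl
        rw [mem_ordLists] at hl
        cases l with
        | nil =>
          obtain ⟨x, hx⟩ := hne
          simpa using (hl.2 x).2 hx
        | cons a w =>
          have hnd := List.nodup_cons.1 hl.1
          refine ⟨⟨a, w⟩, ?_, rfl⟩
          simp only [Finset.mem_sigma, mem_ordLists, Finset.mem_erase]
          refine ⟨(hl.2 a).1 (by simp), hnd.2, fun x => ?_⟩
          rw [← hl.2 x, List.mem_cons]
          constructor
          · intro h; exact ⟨fun e => hnd.1 (e ▸ h), Or.inr h⟩
          · rintro ⟨h1, h2 | h2⟩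
            · exact absurd h2 h1
            · exact h2
      · intro _ _; rfl
    rw [step, Finset.sum_sigma]
    have inner : ∀ a ∈ s, ∑ w ∈ ordLists (s.erase a), (X : ℕ[X]) ^ nseList (a :: w) =
        (if a = s.min' hne then 1 else X) * Ppoly m := by
      intro a ha
      rw [← ih (s.erase a) (by rw [Finset.card_erase_of_mem ha]; omega), Finset.mul_sum]
      refine Finset.sum_congr rfl fun w hw => ?_
      rw [mem_ordLists] at hw
      have : (∃ b ∈ w, b < a) ↔ ¬ a = s.min' hne := by
        constructor
        · rintro ⟨b, hb, hba⟩ e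
          have := s.min'_le b (Finset.mem_of_mem_erase ((hw.2 b).1 hb))
          rw [← e] at this
          exact absurd hba (not_lt.2 this)
        · intro h
          refine ⟨s.min' hne, (hw.2 _).2 (Finset.mem_erase.2 ⟨fun e => h e.symm, s.min'_mem hne⟩), ?_⟩
          exact lt_of_le_of_ne (s.min'_le a ha) (fun e => h e.symm)
      rw [nseList, pow_add]
      congr 1
      by_cases h : a = s.min' hne
      · rw [if_neg (by rw [this]; exact not_not.2 h), if_pos h, pow_zero]
      · rw [if_pos (this.2 h), if_neg h, pow_one]
    rw [Finset.sum_congr rfl inner, ← Finset.sum_mul,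
      ← Finset.add_sum_erase s _ (s.min'_mem hne), if_pos rfl,
      Finset.sum_congr rfl (g := fun _ => (X : ℕ[X]))
        (fun x hx => if_neg (Finset.ne_of_mem_erase hx)),
      Finset.sum_const, Finset.card_erase_of_mem (s.min'_mem hne), hs, Ppoly, Ppoly,
      Finset.prod_range_succ, mul_comm]
    simp

/-- Fiber of `f`. -/
def fib {n k : ℕ} (f : Fin n → Fin k) (j : Fin k) : Finset (Fin n) := Finset.univ.filter fun x => f x = j

noncomputable def wt {n k : ℕ} (f : Fin n → Fin k) : ℕ[X] := ∏ j, Ppoly (fib f j).card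

open Classical in
noncomputable def Tpoly (n k : ℕ) : ℕ[X] :=
  ∑ f : Fin n → Fin k, if Function.Surjective f then wt f else 0

open Classical in
theorem llp_eq_coeff (n k j : ℕ) : llpNseCount n k j = (Tpoly n k).coeff j := by
  let S : Finset (Σ _ : Fin n → Fin k, (Fin k → List (Fin n))) :=
    (Finset.univ.filter fun f : Fin n → Fin k => Function.Surjective f).sigma
      (fun f => Fintype.piFinset fun i => ordLists (fib f i))
  have hT : Tpoly n k = ∑ p ∈ S, (X : ℕ[X]) ^ nseLL p.2 := by
    rw [Finset.sum_sigma, Tpoly, ← Finset.sum_filter]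
    refine Finset.sum_congr rfl fun f _ => ?_
    simp only [nseLL, ← Finset.prod_pow_eq_pow_sum]
    rw [← Finset.prod_univ_sum (fun i => ordLists (fib f i)) (fun _ w => (X : ℕ[X]) ^ nseList w)]
    exact Finset.prod_congr rfl fun i _ => (sum_ordLists _ _ rfl).symm
  have hmem : ∀ p ∈ S, ∀ x i, x ∈ p.2 i ↔ p.1 x = i := by
    intro p hp x i
    simp only [S, Finset.mem_sigma, Fintype.mem_piFinset, mem_ordLists] at hp
    rw [(hp.2 i).2 x, fib]; simp
  rw [hT, Polynomial.finsetSum_coeff]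
  simp only [Polynomial.coeff_X_pow]
  rw [← Finset.card_filter, llpNseCount]
  have himg : {L : Fin k → List (Fin n) | IsListOfLists n k L ∧ nseLL L = j} =
      (((S.filter fun p => j = nseLL p.2).image (fun p => p.2) : Finset _) : Set (Fin k → List (Fin n))) := by
    ext L
    simp only [Set.mem_ofPred_eq, Finset.coe_image, Finset.coe_filter, Set.mem_image]
    constructor
    · rintro ⟨⟨h1, h2, h3, h4⟩, h5⟩
      choose f hf using h4
      have hx : ∀ x i, x ∈ L i ↔ f x = i := by
        intro x i
        refine ⟨fun h => ?_, fun h => h ▸ hf x⟩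
        by_contra hne
        exact h3 (f x) i hne x (hf x) h
      refine ⟨⟨f, L⟩, ⟨?_, h5.symm⟩, rfl⟩
      simp only [S, Finset.mem_sigma, Fintype.mem_piFinset, mem_ordLists, Finset.mem_filter,
        Finset.mem_univ, true_and]
      refine ⟨fun i => ?_, fun i => ⟨h2 i, fun x => by rw [hx, fib]; simp⟩⟩
      obtain ⟨x, hxi⟩ := List.exists_mem_of_ne_nil _ (h1 i)
      exact ⟨x, (hx x i).1 hxi⟩
    · rintro ⟨p, ⟨hp, h5⟩, rfl⟩
      have hx := hmem p hp
      simp only [S, Finset.mem_sigma, Fintype.mem_piFinset, mem_ordLists, Finset.mem_filter,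
        Finset.mem_univ, true_and] at hp
      refine ⟨⟨fun i => ?_, fun i => (hp.2 i).1, fun i l hil x h1 h2 => ?_, fun x => ⟨p.1 x, (hx _ _).2 rfl⟩⟩, h5.symm⟩
      · obtain ⟨x, hxi⟩ := hp.1 i
        exact List.ne_nil_of_mem ((hx x i).2 hxi)
      · exact hil (((hx _ _).1 h1).symm.trans ((hx _ _).1 h2))
  rw [himg, Set.ncard_coe_finset, Finset.card_image_of_injOn]
  rintro ⟨f, L⟩ hp ⟨g, M⟩ hq h
  simp only at h
  subst h
  have : f = g := by
    ext x
    have h1 := hmem _ (Finset.mem_filter.1 hp).1 x (f x)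
    have h2 := hmem _ (Finset.mem_filter.1 hq).1 x (f x)
    simp only at h1 h2
    rw [h2.1 (h1.2 trivial)]
  subst this
  rfl

theorem Ppoly_succ (m : ℕ) : Ppoly (m+1) = (1 + (m : ℕ[X]) * X) * Ppoly m := by
  rw [Ppoly, Finset.prod_range_succ, mul_comm]; rfl

theorem fib_cons_card {n k : ℕ} (j i : Fin k) (g : Fin n → Fin k) :
    (fib (Fin.cons j g : Fin (n+1) → Fin k) i).card = (if j = i then 1 else 0) + (fib g i).card := by
  unfold fib
  rw [Finset.card_filter, Fin.sum_univ_succ, Finset.card_filter]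
  simp

theorem wt_cons {n k : ℕ} (j : Fin k) (g : Fin n → Fin k) :
    wt (Fin.cons j g : Fin (n+1) → Fin k) = (1 + ((fib g j).card : ℕ[X]) * X) * wt g := by
  unfold wt
  rw [← Finset.mul_prod_erase _ _ (Finset.mem_univ j), ← Finset.mul_prod_erase _ _ (Finset.mem_univ j),
    ← mul_assoc, ← Ppoly_succ, fib_cons_card, if_pos rfl, add_comm 1]
  congr 1
  refine Finset.prod_congr rfl fun i hi => ?_
  rw [fib_cons_card, if_neg (Finset.ne_of_mem_erase hi).symm, zero_add]

theorem wt_succAbove {n k : ℕ} (j : Fin (k+1)) (g : Fin n → Fin k) :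
    wt (fun x => j.succAbove (g x)) = wt g := by
  unfold wt
  rw [Fin.prod_univ_succAbove _ j]
  have h0 : fib (fun x => j.succAbove (g x)) j = ∅ := by
    unfold fib; simp
  have h1 : ∀ i, fib (fun x => j.succAbove (g x)) (j.succAbove i) = fib g i := by
    intro i; unfold fib; simp
  simp only [h0, h1]
  simp [Ppoly]

open Classical in
theorem Tpoly_succ (n k : ℕ) : Tpoly (n+1) (k+1) =
    (((k+1 : ℕ) : ℕ[X]) + (n : ℕ[X]) * X) * Tpoly n (k+1) + ((k+1 : ℕ) : ℕ[X]) * Tpoly n k := by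
  have e : Tpoly (n+1) (k+1) = ∑ j : Fin (k+1), ∑ g : Fin n → Fin (k+1),
      if Function.Surjective (Fin.cons j g : Fin (n+1) → Fin (k+1)) then
        (1 + ((fib g j).card : ℕ[X]) * X) * wt g else 0 := by
    rw [Tpoly, ← (Fin.consEquiv (fun _ : Fin (n+1) => Fin (k+1))).sum_comp, Fintype.sum_prod_type]
    refine Finset.sum_congr rfl fun j _ => Finset.sum_congr rfl fun g _ => ?_
    rw [← wt_cons]; rfl
  have hsplit : ∀ (j : Fin (k+1)) (g : Fin n → Fin (k+1)),
      (if Function.Surjective (Fin.cons j g : Fin (n+1) → Fin (k+1)) then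
        (1 + ((fib g j).card : ℕ[X]) * X) * wt g else 0) =
      (1 + ((fib g j).card : ℕ[X]) * X) * (if Function.Surjective g then wt g else 0) +
        if (∀ i, (∃ x, g x = i) ↔ i ≠ j) then wt g else 0 := by
    intro j g
    have hs : Function.Surjective (Fin.cons j g : Fin (n+1) → Fin (k+1)) ↔
        ∀ i, i ≠ j → ∃ x, g x = i := by
      constructor
      · intro h i hi
        obtain ⟨x, hx⟩ := h i
        induction x using Fin.cases with
        | zero => exact absurd hx.symm hi
        | succ x => exact ⟨x, hx⟩
      · intro h i
        by_cases hi : i = j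
        · exact ⟨0, hi.symm⟩
        · obtain ⟨x, hx⟩ := h i hi
          exact ⟨x.succ, hx⟩
    by_cases hc : Function.Surjective (Fin.cons j g : Fin (n+1) → Fin (k+1))
    · rw [if_pos hc]
      rw [hs] at hc
      by_cases hj : ∃ x, g x = j
      · have hg : Function.Surjective g := fun i => by
          by_cases hi : i = j
          · rw [hi]; exact hj
          · exact hc i hi
        rw [if_pos hg, if_neg, add_zero]
        intro h
        exact (h j).1 hj rfl
      · have hg : ¬ Function.Surjective g := fun h => hj (h j)
        rw [if_neg hg, if_pos]
        · have : fib g j = ∅ := by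
            unfold fib
            rw [Finset.filter_eq_empty_iff]
            intro x _ hx
            exact hj ⟨x, hx⟩
          simp [this]
        · intro i
          refine ⟨fun h e => hj (e ▸ h), hc i⟩
    · rw [if_neg hc]
      rw [hs] at hc
      rw [if_neg, if_neg]
      · simp
      · intro h; exact hc fun i hi => (h i).2 hi
      · intro h; exact hc fun i _ => h i
  have hsecond : ∀ j : Fin (k+1), ∑ g : Fin n → Fin (k+1),
      (if (∀ i, (∃ x, g x = i) ↔ i ≠ j) then wt g else 0) = Tpoly n k := by
    intro j
    rw [Tpoly, ← Finset.sum_filter, ← Finset.sum_filter]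
    symm
    refine Finset.sum_bij (fun g _ => fun x => j.succAbove (g x)) ?_ ?_ ?_ ?_
    · intro g hg
      simp only [Finset.mem_filter, Finset.mem_univ, true_and] at hg ⊢
      intro i
      constructor
      · rintro ⟨x, rfl⟩; exact Fin.succAbove_ne _ _
      · intro h
        obtain ⟨y, rfl⟩ := Fin.exists_succAbove_eq h
        obtain ⟨x, rfl⟩ := hg y
        exact ⟨x, rfl⟩
    · intro g _ g' _ h
      funext x
      exact Fin.succAbove_right_injective (congrFun h x)
    · intro g hg
      simp only [Finset.mem_filter, Finset.mem_univ, true_and] at hg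
      have : ∀ x, ∃ y, j.succAbove y = g x := fun x =>
        Fin.exists_succAbove_eq ((hg (g x)).1 ⟨x, rfl⟩)
      choose g' hg' using this
      refine ⟨g', ?_, funext hg'⟩
      simp only [Finset.mem_filter, Finset.mem_univ, true_and]
      intro y
      obtain ⟨x, hx⟩ := (hg (j.succAbove y)).2 (Fin.succAbove_ne _ _)
      exact ⟨x, Fin.succAbove_right_injective (p := j) (by rw [hg', hx])⟩
    · intro g _; exact (wt_succAbove j g).symm
  have hcard : ∀ g : Fin n → Fin (k+1), ∑ j, ((fib g j).card : ℕ[X]) = n := by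
    intro g
    rw [← Nat.cast_sum]
    congr 1
    have := Finset.card_eq_sum_card_fiberwise (f := g) (s := Finset.univ) (t := Finset.univ)
      (fun _ _ => by simp)
    simpa [fib] using this.symm
  rw [e]
  simp only [hsplit, Finset.sum_add_distrib, hsecond]
  rw [Finset.sum_comm]
  simp only [← Finset.sum_mul, Finset.sum_add_distrib, hcard]
  rw [← Finset.mul_sum]
  simp [Tpoly]

theorem Tpoly_zero_right (n : ℕ) : Tpoly (n+1) 0 = 0 := by
  unfold Tpoly
  simp

theorem Tpoly_zero_succ (k : ℕ) : Tpoly 0 (k+1) = 0 := by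
  unfold Tpoly
  refine Finset.sum_eq_zero fun f _ => if_neg fun h => ?_
  obtain ⟨x, _⟩ := h 0
  exact x.elim0

theorem Tpoly_zero_zero : Tpoly 0 0 = 1 := by
  unfold Tpoly
  rw [Fintype.sum_unique, if_pos (show Function.Surjective _ from fun x => x.elim0)]
  simp [wt]

theorem coeff_Tpoly (n : ℕ) : ∀ k j, (n < j → (Tpoly n k).coeff j = 0) ∧
    ∀ m, n = m + j → (Tpoly n k).coeff j =
      Nat.stirlingFirst n m * (Nat.stirlingSecond m k * k.factorial) := by
  induction n with
  | zero =>
    intro k j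
    cases k with
    | zero =>
      rw [Tpoly_zero_zero]
      refine ⟨fun h => by rw [Polynomial.coeff_one, if_neg (by omega)], fun m h => ?_⟩
      obtain ⟨rfl, rfl⟩ : m = 0 ∧ j = 0 := by omega
      simp
    | succ k =>
      rw [Tpoly_zero_succ]
      refine ⟨fun h => by simp, fun m h => ?_⟩
      obtain ⟨rfl, rfl⟩ : m = 0 ∧ j = 0 := by omega
      simp
  | succ n ih =>
    intro k j
    cases k with
    | zero =>
      rw [Tpoly_zero_right]
      refine ⟨fun h => by simp, fun m h => ?_⟩
      cases m <;> simp
    | succ k =>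
      have hc0 : (Tpoly (n+1) (k+1)).coeff 0 = (k+1) * (Tpoly n (k+1)).coeff 0
          + (k+1) * (Tpoly n k).coeff 0 := by
        rw [Tpoly_succ, Polynomial.coeff_add, add_mul, Polynomial.coeff_add, mul_assoc,
          Polynomial.coeff_natCast_mul, Polynomial.coeff_natCast_mul,
          Polynomial.coeff_natCast_mul, Polynomial.coeff_X_mul_zero]
        simp
      have hcs : ∀ i, (Tpoly (n+1) (k+1)).coeff (i+1) = (k+1) * (Tpoly n (k+1)).coeff (i+1)
          + n * (Tpoly n (k+1)).coeff i + (k+1) * (Tpoly n k).coeff (i+1) := by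
        intro i
        rw [Tpoly_succ, Polynomial.coeff_add, add_mul, Polynomial.coeff_add, mul_assoc,
          Polynomial.coeff_natCast_mul, Polynomial.coeff_natCast_mul,
          Polynomial.coeff_natCast_mul, Polynomial.coeff_X_mul]
        simp
      constructor
      · intro h
        obtain ⟨i, rfl⟩ : ∃ i, j = i + 1 := ⟨j - 1, by omega⟩
        rw [hcs, (ih _ _).1 (by omega), (ih _ _).1 (by omega), (ih _ _).1 (by omega)]
        simp
      · intro m hm
        cases m with
        | zero =>
          obtain rfl : j = n + 1 := by omega
          rw [hcs, (ih _ (n+1)).1 (by omega), (ih _ (n+1)).1 (by omega), (ih _ n).2 0 (by omega)]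
          cases n <;> simp
        | succ m =>
          rw [Nat.stirlingFirst_succ_succ, Nat.stirlingSecond_succ_succ, Nat.factorial_succ]
          cases j with
          | zero =>
            obtain rfl : n = m := by omega
            rw [hc0, (ih _ 0).2 n (by omega), (ih _ 0).2 n (by omega),
              Nat.stirlingFirst_eq_zero_of_lt (Nat.lt_succ_self n), Nat.factorial_succ]
            ring
          | succ j =>
            rw [hcs, (ih _ (j+1)).2 m (by omega), (ih _ (j+1)).2 m (by omega),
              (ih _ j).2 (m+1) (by omega), Nat.stirlingSecond_succ_succ, Nat.factorial_succ]
            ring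

end ListPart
section StirlingSecondPart
open Polynomial

open Classical in
theorem surj_card (m k : ℕ) :
    (Finset.univ.filter fun f : Fin m → Fin k => Function.Surjective f).card =
      Nat.stirlingSecond m k * k.factorial := by
  have h := (coeff_Tpoly m k 0).2 m rfl
  rw [Nat.stirlingFirst_self, one_mul] at h
  rw [← h, Tpoly, Polynomial.finsetSum_coeff, Finset.card_filter]
  refine Finset.sum_congr rfl fun f _ => ?_
  split_ifs
  · rw [Polynomial.coeff_zero_eq_eval_zero, wt, Polynomial.eval_prod]
    simp [Ppoly, Polynomial.eval_prod]
  · simp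

open Classical in
theorem surj_card' (m k : ℕ) :
    (Finset.univ.filter fun f : Fin m → Fin k => Function.Surjective f).card =
      stirlingSecond m k * k.factorial := by
  have hS : stirlingSecond m k = (Finset.univ.filter fun P : Finset (Finset (Fin m)) =>
      IsPartitionOf m P ∧ P.card = k).card := by
    unfold stirlingSecond
    rw [← Set.ncard_coe_finset]; simp
  have hmemfib : ∀ (f : Fin m → Fin k) i x, x ∈ fib f i ↔ f x = i := by
    intro f i x; simp [fib]
  have hinj : ∀ f : Fin m → Fin k, Function.Surjective f → Function.Injective (fib f) := by
    intro f hf i j h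
    obtain ⟨x, hx⟩ := hf i
    have : x ∈ fib f j := h ▸ (hmemfib f i x).2 hx
    rw [← hx, (hmemfib f j x).1 this]
  rw [hS]
  rw [Finset.card_eq_sum_card_fiberwise (f := fun f => Finset.univ.image (fib f))
    (t := Finset.univ.filter fun P : Finset (Finset (Fin m)) => IsPartitionOf m P ∧ P.card = k)]
  · refine Finset.sum_const_nat fun P hP => ?_
    simp only [Finset.mem_filter, Finset.mem_univ, true_and] at hP
    obtain ⟨⟨h1, h2, h3⟩, h4⟩ := hP
    have hcard : Fintype.card (Fin k ≃ {b // b ∈ P}) = k.factorial := by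
      rw [Fintype.card_equiv (Fintype.equivOfCardEq (by simp [h4])), Fintype.card_fin]
    rw [← hcard, ← Finset.card_univ]
    choose b hb hxb using h3
    have huniq : ∀ x, ∀ c ∈ P, x ∈ c → c = b x := by
      intro x c hc hx
      by_contra hne
      exact Finset.disjoint_left.1 (h2 c hc (b x) (hb x) hne) hx (hxb x)
    have hfibe : ∀ (e : Fin k ≃ {b // b ∈ P}) i, fib (fun x => e.symm ⟨b x, hb x⟩) i = (e i).1 := by
      intro e i
      ext x
      rw [hmemfib, Equiv.symm_apply_eq]
      constructor
      · intro h
        rw [← h]; exact hxb x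
      · intro h
        exact Subtype.ext (huniq x _ (e i).2 h).symm
    symm
    refine Finset.card_bij (fun e _ => fun x => e.symm ⟨b x, hb x⟩) ?_ ?_ ?_
    · intro e _
      simp only [Finset.mem_filter, Finset.mem_univ, true_and]
      constructor
      · intro i
        obtain ⟨x, hx⟩ := h1 (e i).1 (e i).2
        rw [← hfibe, hmemfib] at hx
        exact ⟨x, hx⟩
      · ext c
        simp only [Finset.mem_image, Finset.mem_univ, true_and, hfibe]
        constructor
        · rintro ⟨i, rfl⟩; exact (e i).2
        · intro hc; exact ⟨e.symm ⟨c, hc⟩, by simp⟩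
    · intro e _ e' _ h
      ext1 i
      apply Subtype.ext
      rw [← hfibe, ← hfibe, h]
    · intro f hf
      simp only [Finset.mem_filter, Finset.mem_univ, true_and] at hf
      obtain ⟨hf, hP⟩ := hf
      have hmem : ∀ i, fib f i ∈ P := fun i => hP ▸ Finset.mem_image_of_mem _ (Finset.mem_univ i)
      have hbij : Function.Bijective (fun i => (⟨fib f i, hmem i⟩ : {b // b ∈ P})) := by
        constructor
        · intro i j h
          exact hinj f hf (congrArg Subtype.val h)
        · rintro ⟨c, hc⟩
          have hc' := hc
          rw [← hP, Finset.mem_image] at hc'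
          obtain ⟨i, _, rfl⟩ := hc'
          exact ⟨i, rfl⟩
      refine ⟨Equiv.ofBijective _ hbij, Finset.mem_univ _, ?_⟩
      funext x
      rw [Equiv.symm_apply_eq]
      apply Subtype.ext
      exact (huniq x _ (hmem (f x)) ((hmemfib _ _ _).2 rfl)).symm
  · intro f hf
    simp only [Finset.coe_filter, Finset.mem_univ, true_and, Set.mem_ofPred_eq] at hf ⊢
    refine ⟨⟨?_, ?_, ?_⟩, ?_⟩
    · intro c hc
      obtain ⟨i, _, rfl⟩ := Finset.mem_image.1 hc
      obtain ⟨x, hx⟩ := hf i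
      exact ⟨x, (hmemfib _ _ _).2 hx⟩
    · intro c hc d hd hne
      obtain ⟨i, _, rfl⟩ := Finset.mem_image.1 hc
      obtain ⟨j, _, rfl⟩ := Finset.mem_image.1 hd
      rw [Finset.disjoint_left]
      intro x hx hy
      rw [hmemfib] at hx hy
      exact hne (by rw [← hx, ← hy])
    · intro x
      exact ⟨fib f (f x), Finset.mem_image_of_mem _ (Finset.mem_univ _), (hmemfib _ _ _).2 rfl⟩
    · rw [Finset.card_image_of_injective _ (hinj f hf)]; simp

end StirlingSecondPart

/-- For `n ≥ 1` and `0 ≤ j ≤ n-1`, the number of ordered partitions of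
`[n]` into `k` nonempty lists with `nse = j`, summed over `1 ≤ k ≤ n-j`, equals
`∑_{k=1}^{n-j} c(n,n-j) S(n-j,k) k!`; indeed for each such `k` the marginal count
is `c(n,n-j) S(n-j,k) k!`. -/
theorem list_of_lists_nse_marginal (n j : ℕ) (hn : 1 ≤ n) (hj : j ≤ n - 1) :
    (∑ k ∈ Finset.Icc 1 (n - j), llpNseCount n k j) =
        ∑ k ∈ Finset.Icc 1 (n - j),
          stirlingFirst n (n - j) * stirlingSecond (n - j) k * Nat.factorial k ∧
      ∀ k, 1 ≤ k → k ≤ n - j →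
        llpNseCount n k j =
          stirlingFirst n (n - j) * stirlingSecond (n - j) k * Nat.factorial k := by
  have key : ∀ k, llpNseCount n k j =
      stirlingFirst n (n - j) * stirlingSecond (n - j) k * Nat.factorial k := by
    intro k
    rw [llp_eq_coeff, (coeff_Tpoly n k j).2 (n - j) (by omega), aux_stirlingFirst, ← surj_card,
      surj_card', mul_assoc]
  exact ⟨Finset.sum_congr rfl fun k _ => key k, fun k _ _ => key k⟩
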